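/- arXiv:1505.03575 — 5 statements merged into one kernel-verified Lean document; each statement's English description precedes it below -/
import Mathlib

section
/- Let A = 𝒥_n(α) and B = 𝒥_m(β)ᵀ be quaternion Jordan blocks with α not conjugate to β, equivalently P_{α,β} := |α|² − (α + ᾱ)β + β² ≠ 0. Then for every C ∈ ℍ^{n×m} the equation AX − XB = C has a unique solution, given by X = Σ_{k=0}^{n+m−2} ( Σ_{i=0}^{k+1} (−1)^{k+i} binom(k+1, i) ᾱ^{k−i+1} M_k β^i ) · P_{α,β}^{−(k+1)}, where M_k = Σ_{ℓ=0}^{k} (−1)^ℓ binom(k, ℓ) F_n^{k−ℓ} C (F_mᵀ)^ℓ for k = 0, …, n+m−2. -/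
open Quaternion Matrix

/-- The matrix `F_n` with ones on the first subdiagonal and zeros elsewhere. -/
noncomputable def subdiagOne (n : ℕ) : Matrix (Fin n) (Fin n) ℍ[ℝ] :=
  Matrix.of fun i j => if (i : ℕ) = (j : ℕ) + 1 then 1 else 0

/-- The lower triangular Jordan block `𝒥_n(α) = αI_n + F_n`. -/
noncomputable def jordanBlockQ (n : ℕ) (a : ℍ[ℝ]) : Matrix (Fin n) (Fin n) ℍ[ℝ] :=
  Matrix.diagonal (fun _ => a) + subdiagOne n

/-!
For square matrices `A` and `B` write `T(A, B)` for the operator `X ↦ A X - X B`. Then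
`T(αI + F, βI + G) = D + N` with `D = T(αI, βI)` and `N = T(F, G)`, which commute. Since `α + ᾱ` and
`α ᾱ` are central, `D` composed with `D' = T(ᾱI, βI)` is right multiplication by `P`, so
`D⁻¹ Y = (D' Y) P⁻¹`. As `N` is a difference of commuting nilpotents, it is nilpotent, and the
Neumann series `(D + N)⁻¹ = ∑ₖ (-1)ᵏ D⁻⁽ᵏ⁺¹⁾ Nᵏ` is finite. The binomial theorem applied to `D'ᵏ⁺¹`
and `Nᵏ`, both differences of a left and a right multiplication, gives the explicit formula.
-/

section Ring

variable {K R : Type*} [CommRing K] [Ring R] [Algebra K R]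

variable (K) in
theorem sub_pow_of_commute {x y : R} (h : Commute x y) (k : ℕ) :
    (x - y) ^ k = ∑ i ∈ Finset.range (k + 1),
      ((-1 : K) ^ i * (k.choose i : K)) • (x ^ (k - i) * y ^ i) := by
  rw [sub_eq_neg_add, h.symm.neg_left.add_pow]
  refine Finset.sum_congr rfl fun i _ => ?_
  rw [neg_pow, mul_assoc ((-1 : R) ^ i), (h.symm.pow_pow i (k - i)).eq, Algebra.smul_def,
    mul_assoc, ← (Nat.cast_commute (k.choose i) (x ^ (k - i) * y ^ i)).eq]
  simp [mul_assoc]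

variable (K) in
/-- The truncated Neumann series `∑ₖ (-1)ᵏ u⁻⁽ᵏ⁺¹⁾ Nᵏ`, `k < d`, for the inverse of `u + N`. -/
noncomputable def neumannSum (u : Rˣ) (N : R) (d : ℕ) : R :=
  ∑ k ∈ Finset.range d, (-1 : K) ^ k • ((↑u⁻¹ : R) ^ (k + 1) * N ^ k)

variable {u : Rˣ} {N : R} {d : ℕ}

theorem add_mul_neumannSum (h : Commute (u : R) N) (hN : N ^ d = 0) :
    (u + N) * neumannSum K u N d = 1 := by
  have hinv : Commute (↑u⁻¹ : R) N := h.units_inv_left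
  have hsum : neumannSum K u N d = ↑u⁻¹ * ∑ k ∈ Finset.range d, (-(↑u⁻¹ * N)) ^ k := by
    rw [neumannSum, Finset.mul_sum]
    refine Finset.sum_congr rfl fun k _ => ?_
    rw [← neg_one_smul K (↑u⁻¹ * N), smul_pow, hinv.mul_pow, mul_smul_comm, pow_succ', mul_assoc]
  have hfactor : (u + N) * ↑u⁻¹ = 1 - -(↑u⁻¹ * N) := by
    rw [add_mul, u.mul_inv, hinv.eq, sub_neg_eq_add]
  rw [hsum, ← mul_assoc, hfactor, mul_neg_geom_sum, neg_pow, hinv.mul_pow, hN, mul_zero, mul_zero,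
    sub_zero]

theorem commute_neumannSum (h : Commute (u : R) N) :
    Commute (u + N) (neumannSum K u N d) := by
  have hinv : Commute (u + N) (↑u⁻¹ : R) :=
    ((Commute.refl (u : R)).add_left h.symm).units_inv_right
  exact Commute.sum_right _ _ _ fun k _ =>
    ((hinv.pow_right _).mul_right ((h.add_left (.refl N)).pow_right k)).smul_right _

end Ring

section Sylvester

variable (K : Type*) {H ι κ : Type*} [CommRing K] [Ring H] [Algebra K H]
  [Fintype ι] [Fintype κ]

/-- The Sylvester operator `X ↦ A X - X B`. -/
def sylvesterMap (A : Matrix ι ι H) (B : Matrix κ κ H) : Module.End K (Matrix ι κ H) :=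
  mulLeftLinearMap κ K A - mulRightLinearMap ι K B

@[simp]
theorem sylvesterMap_apply (A : Matrix ι ι H) (B : Matrix κ κ H) (X : Matrix ι κ H) :
    sylvesterMap K A B X = A * X - X * B := rfl

theorem sylvesterMap_add (A A' : Matrix ι ι H) (B B' : Matrix κ κ H) :
    sylvesterMap K (A + A') (B + B') = sylvesterMap K A B + sylvesterMap K A' B' := by
  ext1 X
  simp only [sylvesterMap_apply, LinearMap.add_apply, Matrix.add_mul, Matrix.mul_add]
  abel

variable {K} in
theorem commute_mulLeft_mulRight (A : Matrix ι ι H) (B : Matrix κ κ H) :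
    Commute (mulLeftLinearMap κ K A) (mulRightLinearMap ι K B) :=
  commute_mulLeftLinearMap_mulRightLinearMap A B

theorem commute_sylvesterMap {A A' : Matrix ι ι H} {B B' : Matrix κ κ H} (hA : Commute A A')
    (hB : Commute B B') : Commute (sylvesterMap K A B) (sylvesterMap K A' B') := by
  have hleft : Commute (mulLeftLinearMap κ K A) (mulLeftLinearMap κ K A') := by
    simp only [commute_iff_eq, Module.End.mul_eq_comp, ← mulLeftLinearMap_mul, hA.eq]
  have hright : Commute (mulRightLinearMap ι K B) (mulRightLinearMap ι K B') := by
    simp only [commute_iff_eq, Module.End.mul_eq_comp, ← mulRightLinearMap_mul, hB.eq]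
  exact (hleft.sub_right (commute_mulLeft_mulRight A B')).sub_left
    ((commute_mulLeft_mulRight A' B).symm.sub_right hright)

variable [DecidableEq ι] [DecidableEq κ]

theorem sylvesterMap_pow_apply (A : Matrix ι ι H) (B : Matrix κ κ H) (k : ℕ) (X : Matrix ι κ H) :
    (sylvesterMap K A B ^ k) X = ∑ i ∈ Finset.range (k + 1),
      ((-1 : K) ^ i * (k.choose i : K)) • (A ^ (k - i) * X * B ^ i) := by
  rw [sylvesterMap, sub_pow_of_commute K (commute_mulLeft_mulRight A B)]
  simp [LinearMap.sum_apply, Matrix.mul_assoc]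

theorem sylvesterMap_pow_eq_zero {A : Matrix ι ι H} {B : Matrix κ κ H} {n m : ℕ} (hA : A ^ n = 0)
    (hB : B ^ m = 0) : sylvesterMap K A B ^ (n + m - 1) = 0 := by
  ext1 X
  rw [sylvesterMap_pow_apply]
  refine Finset.sum_eq_zero fun i _ => ?_
  rcases le_or_gt m i with hmi | him
  · rw [pow_eq_zero_of_le hmi hB, Matrix.mul_zero, smul_zero]
  · rw [pow_eq_zero_of_le (by lia) hA, Matrix.zero_mul, Matrix.zero_mul, smul_zero]

end Sylvester

section Scalar

variable (K : Type*) {H ι κ : Type*} [CommRing K] [Ring H] [Algebra K H]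
  [Fintype κ] [DecidableEq κ]

theorem map_mul_right_eq_mul_scalar (b : H) (X : Matrix ι κ H) :
    X.map (fun q => q * b) = X * scalar κ b := by
  ext i j
  simp

variable [Fintype ι] [DecidableEq ι] {α α' β : H}

theorem map_mul_mul_eq_scalar_mul_mul_scalar (a b : H) (X : Matrix ι κ H) :
    X.map (fun q => a * q * b) = scalar ι a * X * scalar κ b := by
  ext i j
  simp

theorem commute_of_add_mem_center (h : α + α' ∈ Set.center H) : Commute α α' := by
  simpa using (h.comm α).symm.sub_right (Commute.refl α)

theorem sylvesterMap_scalar_mul_sylvesterMap_scalar (hsum : α + α' ∈ Set.center H)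
    (hprod : α * α' ∈ Set.center H) :
    sylvesterMap K (scalar ι α) (scalar κ β) * sylvesterMap K (scalar ι α') (scalar κ β) =
      mulRightLinearMap ι K (scalar κ (α * α' - (α + α') * β + β ^ 2)) := by
  ext1 X
  have hsumX := Matrix.scalar_comm _ hsum.comm X
  have hprodX := Matrix.scalar_comm _ hprod.comm X
  calc scalar ι α * (scalar ι α' * X - X * scalar κ β) -
        (scalar ι α' * X - X * scalar κ β) * scalar κ β
      = scalar ι (α * α') * X - scalar ι (α + α') * X * scalar κ β + X * scalar κ β ^ 2 := by
        simp only [map_mul, map_add, Matrix.mul_sub, Matrix.sub_mul, Matrix.add_mul,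
          Matrix.mul_assoc, pow_two]
        abel
    _ = X * scalar κ (α * α' - (α + α') * β + β ^ 2) := by
        rw [hsumX, hprodX]
        simp only [map_sub, map_add, map_mul, map_pow, Matrix.mul_sub, Matrix.mul_add,
          Matrix.add_mul, Matrix.mul_assoc]

variable (ι κ) in
/-- Right multiplication by an invertible scalar, as an invertible operator on rectangular
matrices. -/
def mulRightScalarUnit (P : Hˣ) : (Module.End K (Matrix ι κ H))ˣ where
  val := mulRightLinearMap ι K (scalar κ (P : H))
  inv := mulRightLinearMap ι K (scalar κ (↑P⁻¹ : H))
  val_inv := by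
    rw [Module.End.mul_eq_comp, ← mulRightLinearMap_mul, ← map_mul, P.inv_mul, map_one,
      mulRightLinearMap_one, Module.End.one_eq_id]
  inv_val := by
    rw [Module.End.mul_eq_comp, ← mulRightLinearMap_mul, ← map_mul, P.mul_inv, map_one,
      mulRightLinearMap_one, Module.End.one_eq_id]

variable (ι κ) in
/-- The operator `X ↦ α X - X β` on matrices as a unit, with inverse `Y ↦ (α' Y - Y β) P⁻¹`. The
scalar `α'` plays the role of the quaternion conjugate `ᾱ`. -/
def sylvesterScalarUnit (hsum : α + α' ∈ Set.center H) (hprod : α * α' ∈ Set.center H) (P : Hˣ)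
    (hP : (P : H) = α * α' - (α + α') * β + β ^ 2) : (Module.End K (Matrix ι κ H))ˣ :=
  (mulRightScalarUnit K ι κ P).leftOfMul
    (sylvesterMap K (scalar ι α) (scalar κ β)) (sylvesterMap K (scalar ι α') (scalar κ β))
    (by rw [sylvesterMap_scalar_mul_sylvesterMap_scalar K hsum hprod, ← hP]; rfl)
    (commute_sylvesterMap K ((commute_of_add_mem_center hsum).map _) (.refl _))

theorem sylvesterScalarUnit_inv_pow_apply (hsum : α + α' ∈ Set.center H)
    (hprod : α * α' ∈ Set.center H) (P : Hˣ) (hP : (P : H) = α * α' - (α + α') * β + β ^ 2)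
    (k : ℕ) (Y : Matrix ι κ H) :
    ((↑(sylvesterScalarUnit K ι κ hsum hprod P hP)⁻¹ : Module.End K (Matrix ι κ H)) ^ k) Y =
      (∑ i ∈ Finset.range (k + 1), ((-1 : K) ^ i * (k.choose i : K)) •
        Y.map (fun q => α' ^ (k - i) * q * β ^ i)).map (fun q => q * (↑P⁻¹ : H) ^ k) := by
  set D' := sylvesterMap K (scalar ι α') (scalar κ β)
  have hcomm : Commute D' ↑(mulRightScalarUnit K ι κ P)⁻¹ := by
    refine Commute.units_inv_right ?_
    change Commute D' (mulRightLinearMap ι K (scalar κ (P : H)))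
    rw [hP, ← sylvesterMap_scalar_mul_sylvesterMap_scalar K hsum hprod]
    exact (commute_sylvesterMap K ((commute_of_add_mem_center hsum).symm.map _)
      (.refl _)).mul_right (.refl D')
  calc ((D' * ↑(mulRightScalarUnit K ι κ P)⁻¹) ^ k) Y
      = (mulRightLinearMap ι K (scalar κ (↑P⁻¹ : H)) ^ k) ((D' ^ k) Y) := by
        rw [hcomm.mul_pow, (hcomm.pow_pow k k).eq]
        rfl
    _ = (D' ^ k) Y * scalar κ ((↑P⁻¹ : H) ^ k) := by
        rw [pow_mulRightLinearMap, mulRightLinearMap_apply, map_pow]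
    _ = _ := by
        simp only [map_mul_right_eq_mul_scalar, map_mul_mul_eq_scalar_mul_mul_scalar, D',
          sylvesterMap_pow_apply, map_pow]

theorem neumannSum_sylvesterMap_apply (hsum : α + α' ∈ Set.center H)
    (hprod : α * α' ∈ Set.center H) (P : Hˣ) (hP : (P : H) = α * α' - (α + α') * β + β ^ 2)
    (F : Matrix ι ι H) (G : Matrix κ κ H) (d : ℕ) (C : Matrix ι κ H) :
    neumannSum K (sylvesterScalarUnit K ι κ hsum hprod P hP) (sylvesterMap K F G) d C =
      ∑ k ∈ Finset.range d,
        (∑ i ∈ Finset.range (k + 2), ((-1 : K) ^ (k + i) * ((k + 1).choose i : K)) •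
          ((sylvesterMap K F G ^ k) C).map (fun q => α' ^ (k + 1 - i) * q * β ^ i)).map
            (fun q => q * (↑P⁻¹ : H) ^ (k + 1)) := by
  rw [neumannSum, LinearMap.sum_apply]
  refine Finset.sum_congr rfl fun k _ => ?_
  rw [LinearMap.smul_apply, Module.End.mul_apply, sylvesterScalarUnit_inv_pow_apply]
  simp only [map_mul_right_eq_mul_scalar, pow_add (-1 : K) k, mul_assoc, mul_smul,
    ← Finset.smul_sum, Matrix.smul_mul]

theorem sylvester_jordan_regular_general {n m : ℕ} (hsum : α + α' ∈ Set.center H)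
    (hprod : α * α' ∈ Set.center H) (P : Hˣ) (hP : (P : H) = α * α' - (α + α') * β + β ^ 2)
    {F : Matrix ι ι H} {G : Matrix κ κ H} (hαF : Commute (scalar ι α) F)
    (hβG : Commute (scalar κ β) G) (hF : F ^ n = 0) (hG : G ^ m = 0)
    (C : Matrix ι κ H) (M : ℕ → Matrix ι κ H)
    (hM : ∀ k, M k = ∑ ℓ ∈ Finset.range (k + 1),
      ((-1 : K) ^ ℓ * (k.choose ℓ : K)) • (F ^ (k - ℓ) * C * G ^ ℓ))
    (X₀ : Matrix ι κ H)
    (hX₀ : X₀ = ∑ k ∈ Finset.range (n + m - 1),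
      (∑ i ∈ Finset.range (k + 2), ((-1 : K) ^ (k + i) * ((k + 1).choose i : K)) •
        (M k).map (fun q => α' ^ (k + 1 - i) * q * β ^ i)).map
          (fun q => q * (↑P⁻¹ : H) ^ (k + 1))) :
    (scalar ι α + F) * X₀ - X₀ * (scalar κ β + G) = C ∧
      ∀ X : Matrix ι κ H, (scalar ι α + F) * X - X * (scalar κ β + G) = C → X = X₀ := by
  let D := sylvesterScalarUnit K ι κ hsum hprod P hP
  let N := sylvesterMap K F G
  have hDN : Commute (D : Module.End K (Matrix ι κ H)) N := commute_sylvesterMap K hαF hβG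
  have hright := add_mul_neumannSum (K := K) hDN (sylvesterMap_pow_eq_zero K hF hG)
  have hleft := (commute_neumannSum (K := K) hDN).eq.symm.trans hright
  have hsolution : X₀ = neumannSum K D N (n + m - 1) C := by
    obtain rfl : M = fun k => (N ^ k) C := funext fun k =>
      (hM k).trans (sylvesterMap_pow_apply K F G k C).symm
    exact hX₀.trans (neumannSum_sylvesterMap_apply K hsum hprod P hP F G _ C).symm
  simp only [← sylvesterMap_apply K, sylvesterMap_add, hsolution]
  refine ⟨LinearMap.congr_fun hright C, ?_⟩
  rintro X rfl
  exact (LinearMap.congr_fun hleft X).symm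

end Scalar

section Nilpotent

variable {ι R : Type*} [Fintype ι] [DecidableEq ι] [Semiring R] {M : Matrix ι ι R} {r : ι → ℕ}

theorem pow_apply_eq_zero_of_rank_lt (hM : ∀ i j, r i ≤ r j → M i j = 0) (k : ℕ) {i j : ι}
    (hij : r i < r j + k) : (M ^ k) i j = 0 := by
  induction k generalizing i with
  | zero => exact Matrix.one_apply_ne fun h => by simp [h] at hij
  | succ k ih =>
    rw [pow_succ', Matrix.mul_apply]
    refine Finset.sum_eq_zero fun l _ => ?_
    rcases le_or_gt (r i) (r l) with hil | hli
    · rw [hM i l hil, zero_mul]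
    · rw [ih (by lia), mul_zero]

theorem pow_eq_zero_of_rank_lt (hM : ∀ i j, r i ≤ r j → M i j = 0) {n : ℕ} (hr : ∀ i, r i < n) :
    M ^ n = 0 := by
  ext i j
  exact pow_apply_eq_zero_of_rank_lt hM n ((hr i).trans_le (Nat.le_add_left n _))

end Nilpotent

theorem subdiagOne_pow_eq_zero (n : ℕ) : subdiagOne n ^ n = 0 :=
  pow_eq_zero_of_rank_lt (r := Fin.val) (fun _ _ h => if_neg (by lia)) Fin.isLt

theorem subdiagOne_transpose_pow_eq_zero (n : ℕ) : (subdiagOne n)ᵀ ^ n = 0 :=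
  pow_eq_zero_of_rank_lt (r := fun i => i.rev)
    (fun _ _ h => if_neg (by rw [Fin.val_rev, Fin.val_rev] at h; lia)) fun i => i.rev.isLt

theorem commute_scalar_subdiagOne (n : ℕ) (a : ℍ[ℝ]) :
    Commute (scalar (Fin n) a) (subdiagOne n) := by
  rw [scalar_commute_iff]
  ext1 i j
  simp [subdiagOne]

theorem commute_scalar_subdiagOne_transpose (n : ℕ) (a : ℍ[ℝ]) :
    Commute (scalar (Fin n) a) (subdiagOne n)ᵀ := by
  rw [scalar_commute_iff, ← transpose_smul, ← transpose_smul,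
    scalar_commute_iff.mp (commute_scalar_subdiagOne n a)]

theorem jordanBlockQ_transpose (n : ℕ) (a : ℍ[ℝ]) :
    (jordanBlockQ n a)ᵀ = scalar (Fin n) a + (subdiagOne n)ᵀ := by
  rw [jordanBlockQ, transpose_add, diagonal_transpose, scalar_apply]

theorem self_add_star_mem_center {R : Type*} [CommRing R] (a : ℍ[R]) :
    a + star a ∈ Set.center ℍ[R] := by
  rw [Quaternion.self_add_star']
  exact Set.algebraMap_mem_center (R := R) _

theorem self_mul_star_mem_center {R : Type*} [CommRing R] (a : ℍ[R]) :
    a * star a ∈ Set.center ℍ[R] := by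
  rw [Quaternion.self_mul_star]
  exact Set.algebraMap_mem_center (R := R) _

/-- If `A = 𝒥_n(α)`, `B = 𝒥_m(β)ᵀ` and
`P = |α|² − (α+ᾱ)β + β² ≠ 0` (i.e. `α` is not conjugate to `β`), then `AX − XB = C`
has the unique solution
`X = Σ_{k=0}^{n+m−2} ( Σ_{i=0}^{k+1} (−1)^{k+i} C(k+1,i) ᾱ^{k+1−i} M_k β^i ) P^{−(k+1)}`,
where `M_k = Σ_{ℓ=0}^{k} (−1)^ℓ C(k,ℓ) F_n^{k−ℓ} C (F_mᵀ)^ℓ`. -/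
theorem sylvester_jordan_regular (n m : ℕ) (α β : ℍ[ℝ]) (C : Matrix (Fin n) (Fin m) ℍ[ℝ])
    (P : ℍ[ℝ]) (hP : P = ((Quaternion.normSq α : ℝ) : ℍ[ℝ]) - (α + star α) * β + β ^ 2)
    (hPne : P ≠ 0)
    (M : ℕ → Matrix (Fin n) (Fin m) ℍ[ℝ])
    (hM : ∀ k, M k = ∑ ℓ ∈ Finset.range (k + 1),
      ((-1 : ℝ) ^ ℓ * (Nat.choose k ℓ : ℝ)) •
        ((subdiagOne n) ^ (k - ℓ) * C * ((subdiagOne m).transpose) ^ ℓ))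
    (X₀ : Matrix (Fin n) (Fin m) ℍ[ℝ])
    (hX₀ : X₀ = ∑ k ∈ Finset.range (n + m - 1),
      (∑ i ∈ Finset.range (k + 2),
        ((-1 : ℝ) ^ (k + i) * (Nat.choose (k + 1) i : ℝ)) •
          (M k).map (fun q => (star α) ^ (k + 1 - i) * q * β ^ i)).map
        (fun q => q * (P⁻¹) ^ (k + 1))) :
    jordanBlockQ n α * X₀ - X₀ * (jordanBlockQ m β).transpose = C ∧
      ∀ X : Matrix (Fin n) (Fin m) ℍ[ℝ],
        jordanBlockQ n α * X - X * (jordanBlockQ m β).transpose = C → X = X₀ := by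
  rw [← Quaternion.self_mul_star] at hP
  rw [jordanBlockQ_transpose]
  exact sylvester_jordan_regular_general ℝ (self_add_star_mem_center α) (self_mul_star_mem_center α)
    (.mk0 P hPne) hP (commute_scalar_subdiagOne n α) (commute_scalar_subdiagOne_transpose m β)
    (subdiagOne_pow_eq_zero n) (subdiagOne_transpose_pow_eq_zero m) C M hM X₀ hX₀
end

section
/- Let α ∈ ℍ, let D, M ∈ ℍ^{1×m} be row vectors, and let B ∈ ℍ^{m×m} be such that 𝒳_{[α]}(B) := B² − (α + ᾱ)B + |α|² I_m is invertible. If (ρ_α D)^{e_r}(B) = M, i.e. DB − αD = M, then D = (ρ_{ᾱ} M)^{e_r}(B) · (𝒳_{[α]}(B))⁻¹ = (MB − ᾱM)(𝒳_{[α]}(B))⁻¹. -/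
open Quaternion Matrix

/-!
The factors `z - α` and `z - ᾱ` multiply to the quadratic `z² - (α + ᾱ) z + ᾱ α`, whose coefficients
are central. Evaluating with `ρ_α` and then with `ρ_ᾱ` therefore amounts to multiplying `D` on the
right by the value of this quadratic at `B`, which can be cancelled when it is invertible.
-/

section RightEvaluation

variable {R l n : Type*} [Ring R] [Fintype n]

/-- The right evaluation `(ρ_α D)^{e_r}(B)` of the polynomial `(z - α) D = z D - α D`, for a
coefficient matrix `D` with any number of rows. -/
def rhoEval (α : R) (B : Matrix n n R) (D : Matrix l n R) : Matrix l n R :=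
  D * B - α • D

/-- The value at `B` of the quadratic polynomial `z² - (α + β) z + β α`. For a quaternion `α` and
`β = ᾱ` this is the paper's `𝒳_{[α]}(B)`, as `|α|² = ᾱ α`. -/
def rhoQuadratic [DecidableEq n] (α β : R) (B : Matrix n n R) : Matrix n n R :=
  B * B - diagonal (fun _ => α + β) * B + diagonal (fun _ => β * α)

theorem rhoEval_rhoEval (α β : R) (B : Matrix n n R) (D : Matrix l n R) :
    rhoEval β B (rhoEval α B D) = D * (B * B) - (α + β) • (D * B) + (β * α) • D := by
  simp only [rhoEval, Matrix.sub_mul, smul_sub, smul_mul, Matrix.mul_assoc, smul_smul, add_smul]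
  abel

theorem mul_diagonal_const_of_mem_center [DecidableEq n] {c : R} (hc : c ∈ Set.center R)
    (D : Matrix l n R) : D * diagonal (fun _ : n => c) = c • D := by
  ext i j
  rw [mul_diagonal, Matrix.smul_apply, smul_eq_mul, hc.comm]

theorem rhoEval_rhoEval_eq_mul_rhoQuadratic [DecidableEq n] {α β : R}
    (hadd : α + β ∈ Set.center R) (hmul : β * α ∈ Set.center R) (B : Matrix n n R)
    (D : Matrix l n R) : rhoEval β B (rhoEval α B D) = D * rhoQuadratic α β B := by
  calc rhoEval β B (rhoEval α B D)
      = D * (B * B) - (α + β) • D * B + (β * α) • D := by rw [rhoEval_rhoEval, smul_mul]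
    _ = D * (B * B) - D * diagonal (fun _ : n => α + β) * B
          + D * diagonal (fun _ : n => β * α) := by
        rw [mul_diagonal_const_of_mem_center hadd, mul_diagonal_const_of_mem_center hmul]
    _ = D * rhoQuadratic α β B := by
        rw [rhoQuadratic, Matrix.mul_add, Matrix.mul_sub, Matrix.mul_assoc D (diagonal _)]

theorem rho_eval_solve_general [DecidableEq n] {α β : R} (hadd : α + β ∈ Set.center R)
    (hmul : β * α ∈ Set.center R) {B W : Matrix n n R} (hW : rhoQuadratic α β B * W = 1)
    {D M : Matrix l n R} (hDM : rhoEval α B D = M) : D = rhoEval β B M * W := by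
  rw [← hDM, rhoEval_rhoEval_eq_mul_rhoQuadratic hadd hmul, Matrix.mul_assoc, hW, Matrix.mul_one]

end RightEvaluation

section QuaternionCenter

variable {R : Type*} [CommRing R]

theorem quaternion_self_add_star_mem_center (α : ℍ[R]) : α + star α ∈ Set.center ℍ[R] := by
  rw [Quaternion.self_add_star']
  exact Set.algebraMap_mem_center (R := R) (A := ℍ[R]) _

theorem quaternion_star_mul_self_mem_center (α : ℍ[R]) : star α * α ∈ Set.center ℍ[R] := by
  rw [Quaternion.star_mul_self]
  exact Set.algebraMap_mem_center (R := R) (A := ℍ[R]) _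

end QuaternionCenter

/-- Let `α ∈ ℍ`, `D, M ∈ ℍ^{1×m}`, and let `B` be such that
`𝒳_{[α]}(B) = B² − (α+ᾱ)B + |α|² I_m` is invertible, with two-sided inverse `W`.
If `(ρ_α D)^{e_r}(B) = DB − αD = M`, then
`D = (ρ_{ᾱ} M)^{e_r}(B) · (𝒳_{[α]}(B))⁻¹ = (MB − ᾱM) W`. -/
theorem rho_eval_solve (m : ℕ) (α : ℍ[ℝ]) (D M : Matrix (Fin 1) (Fin m) ℍ[ℝ])
    (B : Matrix (Fin m) (Fin m) ℍ[ℝ])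
    (chi : Matrix (Fin m) (Fin m) ℍ[ℝ])
    (hchi : chi = B * B - Matrix.diagonal (fun _ => α + star α) * B +
      Matrix.diagonal (fun _ => ((Quaternion.normSq α : ℝ) : ℍ[ℝ])))
    (W : Matrix (Fin m) (Fin m) ℍ[ℝ]) (hW : chi * W = 1 ∧ W * chi = 1)
    (hDM : D * B - α • D = M) :
    D = (M * B - star α • M) * W := by
  have hquad : chi = rhoQuadratic α (star α) B := by
    rw [hchi, rhoQuadratic, Quaternion.star_mul_self]
  exact rho_eval_solve_general (quaternion_self_add_star_mem_center α)
    (quaternion_star_mul_self_mem_center α) (hquad ▸ hW.1) hDM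
end

section
/- Let B = [β_{i,j}]_{i,j=1}^{m} ∈ ℍ^{m×m} be upper triangular (β_{i,j} = 0 for i > j) and let A ∈ ℍ^{n×n} be such that 𝒳_{[β_{k,k}]}(A) := A² − (β_{k,k} + β̄_{k,k})A + |β_{k,k}|² I_n is invertible for k = 1, …, m. Then for every C ∈ ℍ^{n×m} with columns C_1, …, C_m, the equation AX − XB = C has a unique solution X whose columns X_k are defined recursively by X_1 = (𝒳_{[β_{1,1}]}(A))⁻¹ · (C_1 ρ_{β̄_{1,1}})^{e_ℓ}(A) and, for k = 2, …, m, X_k = (𝒳_{[β_{k,k}]}(A))⁻¹ · (C_k ρ_{β̄_{k,k}})^{e_ℓ}(A) + (𝒳_{[β_{k,k}]}(A))⁻¹ Σ_{j=1}^{k−1} (X_j β_{j,k} ρ_{β̄_{k,k}})^{e_ℓ}(A). -/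
open Quaternion Matrix

/-!
Right multiplication by a central element is left multiplication by a scalar matrix, so if `b + b'`
and `b * b'` are central, then `x ↦ A x - x b` and `x ↦ A x - x b'` commute and compose to
multiplication by `𝒳 = A² - (b + b') A + b b'`. If `𝒳` is invertible, `A x - x b = d` therefore has
the unique solution `x = 𝒳⁻¹ (A d - d b')`. When `B` is upper triangular, column `k` of
`A X - X B = C` is such an equation for `X_k`, whose right-hand side involves only the columns `X_j`
with `j < k`, and the columns are determined one after another. For quaternions, take `b' = b̄`:
the trace `b + b̄` and the norm `b b̄` are real.
-/

section

open scoped RightActions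

theorem existsUnique_forall_eq_of_wellFoundedLT {ι : Type*} [LT ι] [WellFoundedLT ι] {M : ι → Type*}
    (F : ∀ k, (∀ j < k, M j) → M k) : ∃! f : ∀ k, M k, ∀ k, f k = F k fun j _ => f j := by
  refine ⟨WellFoundedLT.fix F, WellFoundedLT.fix_eq F, fun g hg => funext fun k => ?_⟩
  induction k using WellFoundedLT.induction with
  | ind k ih =>
    rw [hg k, WellFoundedLT.fix_eq F k]
    exact congrArg (F k) (funext₂ ih)

theorem replicateCol_sum {ι κ n R : Type*} [AddCommMonoid R] (s : Finset κ) (v : κ → n → R) :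
    replicateCol ι (∑ j ∈ s, v j) = ∑ j ∈ s, replicateCol ι (v j) := by
  ext
  simp [Matrix.sum_apply]

theorem replicateCol_op_smul {ι n R : Type*} [Fintype ι] [Unique ι] [Semiring R] (x : n → R)
    (b : R) :
    replicateCol ι (x <• b) = replicateCol ι x * (of fun _ _ => b : Matrix ι ι R) := by
  ext i j
  rw [mul_apply, Fintype.sum_unique]
  rfl

theorem col_mul_of_blockTriangular {m n R : Type*} [Fintype m] [LinearOrder m] [Semiring R]
    {B : Matrix m m R} (hB : B.BlockTriangular id) (X : Matrix n m R) (k : m) :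
    (X * B).col k = X.col k <• B k k + ∑ j with j < k, X.col j <• B j k := by
  have sum_not_lt : ∑ j with ¬ j < k, X.col j <• B j k = X.col k <• B k k := by
    refine Finset.sum_eq_single_of_mem k (by simp) fun j hj hjk => ?_
    have hkj : k < j := (not_lt.1 (Finset.mem_filter.1 hj).2).lt_of_ne' hjk
    rw [hB hkj, MulOpposite.op_zero, zero_smul]
  have col_mul : (X * B).col k = ∑ j, X.col j <• B j k := mulVec_eq_sum (B.col k) X
  rw [col_mul, ← sum_not_lt, add_comm, Finset.sum_filter_add_sum_filter_not]

variable {R m n : Type*} [Ring R]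

theorem commute_of_add_mem_center_s12 {b c : R} (h : b + c ∈ Subring.center R) : Commute b c := by
  have hb : b * (b + c) = (b + c) * b := Subring.mem_center_iff.1 h b
  rwa [mul_add, add_mul, add_right_inj] at hb

theorem smul_eq_op_smul_of_mem_center {c : R} (hc : c ∈ Subring.center R) (x : n → R) :
    c • x = x <• c :=
  funext fun i => (Subring.mem_center_iff.1 hc (x i)).symm

variable [Fintype n]

/-- The column Sylvester operator `x ↦ A x - x b`. In the notation of left evaluation, it sends `D`
to `(D ρ_b)^{e_ℓ}(A)`. -/
def sylvesterHom (A : Matrix n n R) (b : R) : (n → R) →+ (n → R) :=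
  AddMonoidHom.mk' (fun x => A *ᵥ x - x <• b) fun x y => by
    rw [mulVec_add, smul_add, add_sub_add_comm]

theorem sylvesterHom_apply (A : Matrix n n R) (b : R) (x : n → R) :
    sylvesterHom A b x = A *ᵥ x - x <• b :=
  rfl

theorem replicateCol_sylvesterHom {ι : Type*} [Fintype ι] [Unique ι] (A : Matrix n n R) (b : R)
    (x : n → R) :
    replicateCol ι (sylvesterHom A b x) =
      A * replicateCol ι x - replicateCol ι x * (of fun _ _ => b : Matrix ι ι R) := by
  rw [← replicateCol_mulVec, ← replicateCol_op_smul]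
  rfl

/-- The value `A² - (b + b') A + b b'` at `A` of the quadratic polynomial with roots `b` and `b'`.
It is the paper's `𝒳_[b](A)` when `b'` is the conjugate of `b`. -/
def quadraticEval [DecidableEq n] (A : Matrix n n R) (b b' : R) : Matrix n n R :=
  A * A - diagonal (fun _ => b + b') * A + diagonal fun _ => b * b'

section Quadratic

variable [DecidableEq n] {A : Matrix n n R} {b b' : R}

theorem quadraticEval_mulVec (hadd : b + b' ∈ Subring.center R) (hmul : b * b' ∈ Subring.center R)
    (x : n → R) : quadraticEval A b b' *ᵥ x = sylvesterHom A b' (sylvesterHom A b x) := by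
  simp only [quadraticEval, sylvesterHom_apply, add_mulVec, sub_mulVec, ← mulVec_mulVec,
    diagonal_const_mulVec, smul_eq_op_smul_of_mem_center hadd, smul_eq_op_smul_of_mem_center hmul,
    mulVec_sub, mulVec_smul, MulOpposite.op_add, MulOpposite.op_mul, add_smul, mul_smul, smul_sub]
  abel

theorem quadraticEval_comm (hadd : b + b' ∈ Subring.center R) :
    quadraticEval A b b' = quadraticEval A b' b := by
  rw [quadraticEval, quadraticEval, add_comm b b', (commute_of_add_mem_center_s12 hadd).eq]

theorem sylvesterHom_eq_iff (hadd : b + b' ∈ Subring.center R) (hmul : b * b' ∈ Subring.center R)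
    {χ : (Matrix n n R)ˣ} (hχ : (χ : Matrix n n R) = quadraticEval A b b') {x d : n → R} :
    sylvesterHom A b x = d ↔ x = (↑χ⁻¹ : Matrix n n R) *ᵥ sylvesterHom A b' d := by
  have left_inv (y : n → R) :
      (↑χ⁻¹ : Matrix n n R) *ᵥ sylvesterHom A b' (sylvesterHom A b y) = y := by
    rw [← quadraticEval_mulVec hadd hmul, ← hχ, mulVec_mulVec, χ.inv_mul, one_mulVec]
  have right_inv : sylvesterHom A b (sylvesterHom A b' ((↑χ⁻¹ : Matrix n n R) *ᵥ d)) = d := by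
    have hadd' : b' + b ∈ Subring.center R := add_comm b b' ▸ hadd
    have hmul' : b' * b ∈ Subring.center R := (commute_of_add_mem_center_s12 hadd).eq ▸ hmul
    rw [← quadraticEval_mulVec hadd' hmul', quadraticEval_comm hadd', ← hχ, mulVec_mulVec,
      χ.mul_inv, one_mulVec]
  refine ⟨fun h => by rw [← h, left_inv], fun h => ?_⟩
  rw [h, ← right_inv, left_inv]

end Quadratic

variable [Fintype m] [LinearOrder m]

theorem mul_sub_mul_eq_iff_col {B : Matrix m m R} (hB : B.BlockTriangular id)
    {A : Matrix n n R} {X C : Matrix n m R} :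
    A * X - X * B = C ↔
      ∀ k, sylvesterHom A (B k k) (X.col k) = C.col k + ∑ j with j < k, X.col j <• B j k := by
  have col_sub (k : m) : (A * X - X * B).col k = A *ᵥ X.col k - (X * B).col k := rfl
  have eq_iff_col (Y : Matrix n m R) : Y = C ↔ ∀ k, Y.col k = C.col k :=
    ⟨fun h k => h ▸ rfl, ext_col⟩
  simp only [eq_iff_col, col_sub, col_mul_of_blockTriangular hB, sylvesterHom_apply, ← sub_sub,
    sub_eq_iff_eq_add]

variable [DecidableEq n] {B : Matrix m m R} {b' : m → R} {A : Matrix n n R}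
  {χ : m → (Matrix n n R)ˣ}

theorem mul_sub_mul_eq_iff_col_eq (hB : B.BlockTriangular id)
    (hadd : ∀ k, B k k + b' k ∈ Subring.center R) (hmul : ∀ k, B k k * b' k ∈ Subring.center R)
    (hχ : ∀ k, (χ k : Matrix n n R) = quadraticEval A (B k k) (b' k)) {X C : Matrix n m R} :
    A * X - X * B = C ↔ ∀ k, X.col k =
      (↑(χ k)⁻¹ : Matrix n n R) *ᵥ sylvesterHom A (b' k) (C.col k) +
        (↑(χ k)⁻¹ : Matrix n n R) *ᵥ
          ∑ j with j < k, sylvesterHom A (b' k) (X.col j <• B j k) := by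
  simp only [mul_sub_mul_eq_iff_col hB, sylvesterHom_eq_iff (hadd _) (hmul _) (hχ _), map_add,
    map_sum, mulVec_add]

theorem sylvester_upper_triangular_general (hB : B.BlockTriangular id)
    (hadd : ∀ k, B k k + b' k ∈ Subring.center R) (hmul : ∀ k, B k k * b' k ∈ Subring.center R)
    (hχ : ∀ k, (χ k : Matrix n n R) = quadraticEval A (B k k) (b' k)) (C : Matrix n m R) :
    (∃! X : Matrix n m R, A * X - X * B = C) ∧
      ∀ X : Matrix n m R, A * X - X * B = C ↔ ∀ k, X.col k =
        (↑(χ k)⁻¹ : Matrix n n R) *ᵥ sylvesterHom A (b' k) (C.col k) +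
          (↑(χ k)⁻¹ : Matrix n n R) *ᵥ
            ∑ j with j < k, sylvesterHom A (b' k) (X.col j <• B j k) := by
  have column_formula (X : Matrix n m R) :=
    mul_sub_mul_eq_iff_col_eq hB hadd hmul hχ (X := X) (C := C)
  obtain ⟨f, hf, hf_unique⟩ :=
    existsUnique_forall_eq_of_wellFoundedLT fun k (f : ∀ j < k, n → R) =>
      (↑(χ k)⁻¹ : Matrix n n R) *ᵥ sylvesterHom A (b' k) (C.col k) +
        (↑(χ k)⁻¹ : Matrix n n R) *ᵥ
          ∑ j, if h : j < k then sylvesterHom A (b' k) (f j h <• B j k) else 0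
  simp only [dite_eq_ite, ← Finset.sum_filter] at hf hf_unique
  exact ⟨⟨(of f)ᵀ, (column_formula _).2 hf, fun Y hY =>
    transpose_injective (hf_unique Y.col ((column_formula Y).1 hY))⟩, column_formula⟩

end

section

variable {S : Type*} [CommRing S]

theorem quaternion_coe_mem_center (r : S) : (r : ℍ[S]) ∈ Subring.center ℍ[S] :=
  Subring.mem_center_iff.2 fun q => (Quaternion.coe_commutes r q).symm

theorem quaternion_add_star_mem_center (q : ℍ[S]) : q + star q ∈ Subring.center ℍ[S] :=
  Quaternion.self_add_star' q ▸ quaternion_coe_mem_center _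

theorem quaternion_mul_star_mem_center (q : ℍ[S]) : q * star q ∈ Subring.center ℍ[S] :=
  Quaternion.self_mul_star q ▸ quaternion_coe_mem_center _

end

/-- Let `B ∈ ℍ^{m×m}` be upper triangular and let `A ∈ ℍ^{n×n}` be such
that each `𝒳_{[β_{k,k}]}(A) = A² − (β_{k,k}+β̄_{k,k})A + |β_{k,k}|² I_n` is invertible, with
two-sided inverse `W k`.  Then `AX − XB = C` has a unique solution `X`, whose columns satisfy
`X_k = (𝒳_{[β_{k,k}]}(A))⁻¹ (C_k ρ_{β̄_{k,k}})^{e_ℓ}(A)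
      + (𝒳_{[β_{k,k}]}(A))⁻¹ Σ_{j<k} (X_j β_{j,k} ρ_{β̄_{k,k}})^{e_ℓ}(A)`
(for `k = 0` the sum is empty, giving the initial column).  Here
`(D ρ_{β̄})^{e_ℓ}(A) = AD − Dβ̄` for a column vector `D` (right multiplication by the scalar
`β̄` is realized as multiplication by the `1×1` matrix with entry `β̄`), and columns are
indexed from 0. -/
theorem sylvester_upper_triangular (n m : ℕ)
    (B : Matrix (Fin m) (Fin m) ℍ[ℝ]) (hB : ∀ i j : Fin m, j < i → B i j = 0)
    (A : Matrix (Fin n) (Fin n) ℍ[ℝ])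
    (chi : Fin m → Matrix (Fin n) (Fin n) ℍ[ℝ])
    (hchi : ∀ k, chi k = A * A - Matrix.diagonal (fun _ => B k k + star (B k k)) * A +
      Matrix.diagonal (fun _ => ((Quaternion.normSq (B k k) : ℝ) : ℍ[ℝ])))
    (W : Fin m → Matrix (Fin n) (Fin n) ℍ[ℝ])
    (hW : ∀ k, chi k * W k = 1 ∧ W k * chi k = 1)
    (C : Matrix (Fin n) (Fin m) ℍ[ℝ]) :
    (∃! X : Matrix (Fin n) (Fin m) ℍ[ℝ], A * X - X * B = C) ∧
      ∀ X : Matrix (Fin n) (Fin m) ℍ[ℝ], A * X - X * B = C →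
        ∀ k : Fin m, (Matrix.of fun ic (_ : Fin 1) => X ic k) =
          W k * (A * (Matrix.of fun ic (_ : Fin 1) => C ic k) -
              (Matrix.of fun ic (_ : Fin 1) => C ic k) *
                Matrix.of (fun (_ _ : Fin 1) => star (B k k))) +
            W k * ∑ j : Fin m, if j < k then
              (A * ((Matrix.of fun ic (_ : Fin 1) => X ic j) *
                  Matrix.of (fun (_ _ : Fin 1) => B j k)) -
                ((Matrix.of fun ic (_ : Fin 1) => X ic j) *
                    Matrix.of (fun (_ _ : Fin 1) => B j k)) *
                  Matrix.of (fun (_ _ : Fin 1) => star (B k k)))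
            else 0 := by
  refine (sylvester_upper_triangular_general (fun i j => hB i j)
    (fun k => quaternion_add_star_mem_center (B k k))
    (fun k => quaternion_mul_star_mem_center (B k k))
    (χ := fun k => ⟨chi k, W k, (hW k).1, (hW k).2⟩)
    (fun k => (hchi k).trans (by rw [quadraticEval, Quaternion.self_mul_star]))
    C).imp_right fun h X hX k => ?_
  have column_eq := congrArg (replicateCol (Fin 1)) ((h X).1 hX k)
  simp only [Units.inv_mk, replicateCol_add, replicateCol_mulVec, replicateCol_sum,
    replicateCol_sylvesterHom, replicateCol_op_smul, ← Finset.sum_filter] at column_eq ⊢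
  exact column_eq
end

section
/- With the singular-case setup in the context (spherical chains 𝛂, 𝛃 in the same conjugacy class, m ≤ n, data d_{i,j}, recursively defined Γ_{k,j}, and quantities S_j): if S_j = 0 for j = 1, …, m, then Δ_{k,j} := α_k Γ_{k,j} − Γ_{k,j} β_j − c_{k,j} + Γ_{k−1,j} − Γ_{k,j−1} = 0 for all indices k ≥ 1, j ≥ 1 with k < n, j ≤ m, and k + j ≤ n. -/
open Quaternion Matrix

/-!
If `a` and `b` have the same central trace and norm, they are roots of one quadratic polynomial with
central coefficients whose other roots are `ā` and `b̄`. Hence the Sylvester operators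
`x ↦ a x - x b` and `x ↦ ā x - x b` compose to zero in either order. Applying the second operator,
with `a = α_{k+1}` and `b = β_j`, to `Δ_{k+1,j}` removes the quadratic terms in `Γ_{k+1,j}`, and the
recursion for `Γ` (for `k = 0`, the condition `S_j = 0`) turns what is left into
`Δ_{k+1,j} β_j - ᾱ_{k+1} Δ_{k+1,j} = -Δ_{k,j} - Δ_{k+1,j-1}`. If the right-hand side vanishes, then
`Δ_{k+1,j} β_j = ᾱ_{k+1} Δ_{k+1,j}`; if also `Δ_{k+2,j-1} = 0`, the relation one step further puts
`Δ_{k+1,j}` in the image of the operator for `ᾱ_{k+2}`, so `Δ_{k+1,j} β_j = α_{k+2} Δ_{k+1,j}`.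
The chain condition `α_{k+2} ≠ ᾱ_{k+1}` then forces `Δ_{k+1,j} = 0`.
-/

section StarRing

variable {R : Type*} [Ring R] [StarRing R]

/-- `a` and `b` have the same trace `a + ā = b + b̄` and the same norm `ā a = b̄ b`, and both are
central. The intertwining form says all of this at once: `x = 1` gives the equalities, and then
arbitrary `x` gives centrality. Conjugate quaternions are the motivating example. -/
structure SameTraceNorm (a b : R) : Prop where
  trace_mul (x : R) : (a + star a) * x = x * (b + star b)
  norm_mul (x : R) : star a * a * x = x * (star b * b)

namespace SameTraceNorm

variable {a b : R}

lemma commute_star (h : SameTraceNorm a b) : Commute a (star a) := by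
  have trace_eq : a + star a = b + star b := by simpa using h.trace_mul 1
  have trace_comm : (a + star a) * a = a * (a + star a) :=
    (h.trace_mul a).trans (by rw [trace_eq])
  rw [add_mul, mul_add] at trace_comm
  exact (add_left_cancel trace_comm).symm

lemma star_left (h : SameTraceNorm a b) : SameTraceNorm (star a) b where
  trace_mul x := by rw [star_star, add_comm, h.trace_mul]
  norm_mul x := by rw [star_star, h.commute_star.eq, h.norm_mul]

lemma star_mul_sylvester (h : SameTraceNorm a b) (x : R) :
    star a * (a * x - x * b) = (a * x - x * b) * b := by
  linear_combination (norm := noncomm_ring) h.norm_mul x - h.trace_mul x * b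

lemma mul_star_sylvester (h : SameTraceNorm a b) (x : R) :
    a * (star a * x - x * b) = (star a * x - x * b) * b := by
  simpa only [star_star] using h.star_left.star_mul_sylvester x

lemma eq_zero_of_sylvester [NoZeroDivisors R] (h : SameTraceNorm a b) {a' x y : R}
    (hne : a ≠ star a') (hy : star a * y - y * b = x) (hx : x * b = star a' * x) : x = 0 := by
  have hax : a * x = x * b := hy ▸ h.mul_star_sylvester y
  have hprod : (a - star a') * x = 0 := by rw [sub_mul, hax, hx, sub_self]
  exact (mul_eq_zero.mp hprod).resolve_left (sub_ne_zero.mpr hne)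

end SameTraceNorm

lemma add_star_mem_center (hnorm : ∀ x : R, star x * x ∈ Subring.center R) (x : R) :
    x + star x ∈ Subring.center R := by
  have polarization : x + star x = star (1 + x) * (1 + x) - 1 - star x * x := by
    rw [star_add, star_one]
    noncomm_ring
  rw [polarization]
  exact sub_mem (sub_mem (hnorm _) (one_mem _)) (hnorm _)

theorem eq_zero_of_sylvester_recurrence [NoZeroDivisors R] {n m : ℕ} {α β : ℕ → R}
    (hαβ : ∀ i j, 1 ≤ i → i ≤ n → 1 ≤ j → j ≤ m → SameTraceNorm (α i) (β j))
    (hα : ∀ k, 1 ≤ k → k < n → α (k + 1) ≠ star (α k))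
    {Δ : ℕ → ℕ → R} (hΔ_zero_left : ∀ j, Δ 0 j = 0) (hΔ_zero_right : ∀ k, Δ k 0 = 0)
    (hΔ : ∀ k j, j + 1 ≤ m → k + (j + 1) ≤ n →
      Δ (k + 1) (j + 1) * β (j + 1) - star (α (k + 1)) * Δ (k + 1) (j + 1) =
        -Δ k (j + 1) - Δ (k + 1) j)
    (k j : ℕ) (hj : j ≤ m) (hkj : k + j ≤ n) : Δ k j = 0 := by
  induction j generalizing k with
  | zero => exact hΔ_zero_right k
  | succ j ih_col =>
    induction k with
    | zero => exact hΔ_zero_left _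
    | succ k ih_row =>
      have hcol : Δ (k + 1) j = 0 := ih_col _ (by lia) (by lia)
      have hcol_next : Δ (k + 2) j = 0 := ih_col _ (by lia) (by lia)
      have hrow : Δ k (j + 1) = 0 := ih_row (by lia)
      have hrel := hΔ k j hj (by lia)
      have hrel_next := hΔ (k + 1) j hj hkj
      rw [hrow, hcol, neg_zero, sub_zero] at hrel
      rw [hcol_next, sub_zero] at hrel_next
      refine (hαβ (k + 2) (j + 1) (by lia) (by lia) (by lia) hj).eq_zero_of_sylvester
        (y := Δ (k + 2) (j + 1)) (hα (k + 1) (by lia) (by lia)) ?_ (sub_eq_zero.mp hrel)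
      rw [← neg_sub, hrel_next, neg_neg]

/-- The quantity `Δ_{k,j}` measuring the failure of `Γ` to solve the recurrent Sylvester system
`α_k Γ_{k,j} - Γ_{k,j} β_j = c_{k,j} - Γ_{k-1,j} + Γ_{k,j-1}`. Indices are natural numbers with
truncated subtraction, so it has the intended meaning for `1 ≤ k` and `1 ≤ j`. -/
def sylvesterDefect (α β : ℕ → R) (c Γ : ℕ → ℕ → R) (k j : ℕ) : R :=
  α k * Γ k j - Γ k j * β j - c k j + Γ (k - 1) j - Γ k (j - 1)

lemma sylvesterDefect_recurrence {α β : ℕ → R} {c d Γ : ℕ → ℕ → R} {k j : ℕ}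
    (hαβ : SameTraceNorm (α (k + 1)) (β j))
    (hd : d (k + 1) j =
      c (k + 1) j * β j - star (α (k + 1)) * c (k + 1) j + c (k + 1) (j - 1) + c k j)
    (hΓ : (α k - star (α (k + 1))) * Γ k j =
      d (k + 1) j + Γ (k + 1) (j - 2) - Γ (k - 1) j -
        Γ (k + 1) (j - 1) * (star (β j) - β (j - 1))) :
    sylvesterDefect α β c Γ (k + 1) j * β j -
        star (α (k + 1)) * sylvesterDefect α β c Γ (k + 1) j =
      -sylvesterDefect α β c Γ k j - sylvesterDefect α β c Γ (k + 1) (j - 1) := by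
  simp only [sylvesterDefect, Nat.add_sub_cancel, Nat.sub_sub, Nat.reduceAdd]
  linear_combination (norm := noncomm_ring)
    hΓ + hd - hαβ.star_mul_sylvester (Γ (k + 1) j) + hαβ.trace_mul (Γ (k + 1) (j - 1))

end StarRing

section DivisionRing

variable {D : Type*} [DivisionRing D] [StarRing D]

lemma star_conj_of_norm_mem_center {h : D} (hh : h ≠ 0) (hnorm : star h * h ∈ Subring.center D)
    (b : D) : star (h⁻¹ * b * h) = h⁻¹ * star b * h := by
  have norm_comm : h * star h = star h * h :=
    mul_right_cancel₀ hh (by rw [mul_assoc, Subring.mem_center_iff.mp hnorm h])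
  rw [star_mul, star_mul, star_inv₀, ← mul_assoc, mul_inv_eq_iff_eq_mul₀ (star_ne_zero.mpr hh),
    mul_assoc _ h, norm_comm, mul_assoc, Subring.mem_center_iff.mp hnorm, ← norm_comm,
    mul_assoc, inv_mul_cancel_left₀ hh]

lemma SameTraceNorm.of_conj (hnorm : ∀ x : D, star x * x ∈ Subring.center D) {a b : D}
    (hab : ∃ h : D, h ≠ 0 ∧ a = h⁻¹ * b * h) : SameTraceNorm a b := by
  obtain ⟨h, hh, rfl⟩ := hab
  have conj_central {z : D} (hz : z ∈ Subring.center D) : h⁻¹ * z * h = z := by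
    rw [mul_assoc, ← Subring.mem_center_iff.mp hz, inv_mul_cancel_left₀ hh]
  have htrace := add_star_mem_center hnorm b
  constructor <;> intro x <;> rw [star_conj_of_norm_mem_center hh (hnorm h)]
  · rw [← add_mul, ← mul_add, conj_central htrace, Subring.mem_center_iff.mp htrace]
  · have norm_conj : h⁻¹ * star b * h * (h⁻¹ * b * h) = h⁻¹ * (star b * b) * h := by
      simp only [mul_assoc, mul_inv_cancel_left₀ hh]
    rw [norm_conj, conj_central (hnorm b), Subring.mem_center_iff.mp (hnorm b)]

theorem singular_gamma_lemma_general {n m : ℕ} {α β : ℕ → D}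
    (hαβ : ∀ i j, 1 ≤ i → i ≤ n → 1 ≤ j → j ≤ m → SameTraceNorm (α i) (β j))
    (hα : ∀ k, 1 ≤ k → k < n → α (k + 1) ≠ star (α k))
    {c : ℕ → ℕ → D} (hc0 : ∀ j, c 0 j = 0) (hc0' : ∀ i, c i 0 = 0)
    {d : ℕ → ℕ → D}
    (hd : ∀ i j, d i j = c i j * β j - star (α i) * c i j + c i (j - 1) + c (i - 1) j)
    {Γ : ℕ → ℕ → D} (hΓ0 : ∀ j, Γ 0 j = 0) (hΓ0' : ∀ k, Γ k 0 = 0)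
    (hΓ : ∀ k j, 1 ≤ k → 1 ≤ j → j ≤ m → k + j ≤ n →
      Γ k j = (α k - star (α (k + 1)))⁻¹ *
        (d (k + 1) j + Γ (k + 1) (j - 2) - Γ (k - 1) j -
          Γ (k + 1) (j - 1) * (star (β j) - β (j - 1))))
    (hS : ∀ j, 1 ≤ j → j ≤ m →
      d 1 j + Γ 1 (j - 1) * (β (j - 1) - star (β j)) + Γ 1 (j - 2) = 0)
    (k j : ℕ) (hj : j ≤ m) (hkj : k + j ≤ n) :
    α k * Γ k j - Γ k j * β j - c k j + Γ (k - 1) j - Γ k (j - 1) = 0 := by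
  refine eq_zero_of_sylvester_recurrence (Δ := sylvesterDefect α β c Γ) hαβ hα
    (fun j ↦ by simp [sylvesterDefect, hΓ0, hc0]) (fun k ↦ by simp [sylvesterDefect, hΓ0', hc0'])
    (fun k j hj hkj ↦ sylvesterDefect_recurrence
      (hαβ (k + 1) (j + 1) (by lia) (by lia) (by lia) hj) (hd (k + 1) (j + 1)) ?_) k j hj hkj
  rcases k.eq_zero_or_pos with rfl | hk
  · rw [Nat.zero_sub, hΓ0, mul_zero, sub_zero]
    linear_combination (norm := noncomm_ring) -hS (j + 1) (by lia) hj
  · have hne : α k - star (α (k + 1)) ≠ 0 := fun heq ↦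
      hα k hk (by lia) (star_eq_iff_star_eq.mp (sub_eq_zero.mp heq).symm).symm
    rw [hΓ k (j + 1) hk (by lia) hj hkj, mul_inv_cancel_left₀ hne]

end DivisionRing

lemma quaternion_star_mul_self_mem_center_s14 (R : Type*) [CommRing R] (a : ℍ[R]) :
    star a * a ∈ Subring.center ℍ[R] := by
  rw [Quaternion.star_mul_self]
  exact Subring.mem_center_iff.mpr fun x ↦ (Quaternion.coe_commutes _ x).symm

/-- singular case, key lemma.  Let `𝛂 = (α_1,…,α_n)` and
`𝛃 = (β_1,…,β_m)`, `m ≤ n`, be spherical chains in the same conjugacy class, let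
`c_{i,j}` be the entries of `C` (with zero conventions for nonpositive indices), and let
`d_{i,j}`, `Γ_{k,j}`, `S_j` be as in the context.  If `S_j = 0` for `j = 1,…,m`, then
`Δ_{k,j} = α_k Γ_{k,j} − Γ_{k,j} β_j − c_{k,j} + Γ_{k−1,j} − Γ_{k,j−1} = 0`
for all `k ≥ 1`, `j ≥ 1` with `k < n`, `j ≤ m`, `k + j ≤ n`.
(All indexing is 1-based; index `0` realizes the "nonpositive index ↦ 0" convention,
together with truncated subtraction on `ℕ`.) -/
theorem singular_gamma_lemma (n m : ℕ) (hmn : m ≤ n) (α β : ℕ → ℍ[ℝ])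
    (hαconj : ∀ i j, 1 ≤ i → i ≤ n → 1 ≤ j → j ≤ n →
      ∃ h : ℍ[ℝ], h ≠ 0 ∧ α i = h⁻¹ * α j * h)
    (hβconj : ∀ i j, 1 ≤ i → i ≤ m → 1 ≤ j → j ≤ m →
      ∃ h : ℍ[ℝ], h ≠ 0 ∧ β i = h⁻¹ * β j * h)
    (hαβconj : ∀ i j, 1 ≤ i → i ≤ n → 1 ≤ j → j ≤ m →
      ∃ h : ℍ[ℝ], h ≠ 0 ∧ α i = h⁻¹ * β j * h)
    (hαchain : ∀ k, 1 ≤ k → k < n → α (k + 1) ≠ star (α k))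
    (hβchain : ∀ k, 1 ≤ k → k < m → β (k + 1) ≠ star (β k))
    (c : ℕ → ℕ → ℍ[ℝ]) (hc0 : ∀ j, c 0 j = 0) (hc0' : ∀ i, c i 0 = 0)
    (d : ℕ → ℕ → ℍ[ℝ])
    (hd : ∀ i j, d i j = c i j * β j - star (α i) * c i j + c i (j - 1) + c (i - 1) j)
    (Γ : ℕ → ℕ → ℍ[ℝ]) (hΓ0 : ∀ j, Γ 0 j = 0) (hΓ0' : ∀ k, Γ k 0 = 0)
    (hΓ : ∀ k j, 1 ≤ k → 1 ≤ j → j ≤ m → k + j ≤ n →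
      Γ k j = (α k - star (α (k + 1)))⁻¹ *
        (d (k + 1) j + Γ (k + 1) (j - 2) - Γ (k - 1) j -
          Γ (k + 1) (j - 1) * (star (β j) - β (j - 1))))
    (hS : ∀ j, 1 ≤ j → j ≤ m →
      d 1 j + Γ 1 (j - 1) * (β (j - 1) - star (β j)) + Γ 1 (j - 2) = 0) :
    ∀ k j, 1 ≤ k → 1 ≤ j → k < n → j ≤ m → k + j ≤ n →
      α k * Γ k j - Γ k j * β j - c k j + Γ (k - 1) j - Γ k (j - 1) = 0 := by
  intro k j _ _ _ hj hkj
  have hαβ (i j : ℕ) (hi : 1 ≤ i) (hin : i ≤ n) (hj : 1 ≤ j) (hjm : j ≤ m) :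
      SameTraceNorm (α i) (β j) :=
    .of_conj (quaternion_star_mul_self_mem_center_s14 ℝ) (hαβconj i j hi hin hj hjm)
  exact singular_gamma_lemma_general hαβ hαchain hc0 hc0' hd hΓ0 hΓ0' hΓ hS k j hj hkj
end

section
/- With the singular-case setup in the context, let A = 𝒥_𝛂 ∈ ℍ^{n×n} be the lower bidiagonal matrix with diagonal α_1,…,α_n and ones on the first subdiagonal, and B = 𝒥_𝛃ᵀ ∈ ℍ^{m×m} the upper bidiagonal matrix with diagonal β_1,…,β_m and ones on the first superdiagonal. Then every solution X = [x_{i,j}] ∈ ℍ^{n×m} of AX − XB = C satisfies x_{i,j} = Γ_{i,j} for all indices i ≥ 1, j ≥ 1 with i < n, j ≤ m, and i + j ≤ n. In particular, all entries of a solution on the counter-diagonals i + j ≤ n are uniquely determined by A, B, C. -/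
open Quaternion Matrix

/-!
Conjugate quaternions `a`, `b` satisfy the same real quadratic equation, so the operator
`y ↦ y b - ā y` annihilates everything of the form `a x - x b`. Applied to the `(k + 1, j)` entry of
`A X - X B = C`, it eliminates `x_{k+1,j}`. The neighbouring entries `(k, j)` and `(k + 1, j - 1)`
of the equation then turn the rest into `(α_k - ᾱ_{k+1}) x_{k,j} = ⋯`, which is the recursion
defining `Γ`; the chain condition makes the coefficient invertible.
-/

section TraceNorm

/-- `a` and `b` have the same trace `a + star a` and the same norm `star a * a`, both central. This
replaces conjugacy of quaternions in an arbitrary ring with a `star`: `a` and `b` are roots of one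
monic quadratic polynomial with central coefficients. -/
structure ShareCentralTraceNorm {R : Type*} [Ring R] [Star R] (a b : R) : Prop where
  trace_eq : a + star a = b + star b
  norm_eq : star a * a = star b * b
  trace_mem_center : a + star a ∈ Set.center R
  norm_mem_center : star a * a ∈ Set.center R

variable {R : Type*} [Ring R] [Star R] {a b : R}

lemma ShareCentralTraceNorm.trace_mul (h : ShareCentralTraceNorm a b) (x : R) :
    (a + star a) * x = x * (b + star b) := by
  rw [← h.trace_eq, (h.trace_mem_center.comm x).eq]

lemma ShareCentralTraceNorm.norm_mul (h : ShareCentralTraceNorm a b) (x : R) :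
    star a * a * x = x * (star b * b) := by
  rw [← h.norm_eq, (h.norm_mem_center.comm x).eq]

lemma ShareCentralTraceNorm.mul_sub_star_mul_sylvester_eq_zero
    (h : ShareCentralTraceNorm a b) (x : R) :
    (a * x - x * b) * b - star a * (a * x - x * b) = 0 :=
  calc
    (a * x - x * b) * b - star a * (a * x - x * b)
      = (a + star a) * x * b - x * b * b - star a * a * x := by noncomm_ring
    _ = x * (b + star b) * b - x * b * b - x * (star b * b) := by rw [h.trace_mul, h.norm_mul]
    _ = 0 := by noncomm_ring

lemma ShareCentralTraceNorm.sub_star_mul_of_bidiagonal_system (h : ShareCentralTraceNorm a b)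
    {a' b' x up left upUp upLeft leftLeft c cUp cLeft : R}
    (hx : a * x + up - x * b - left = c)
    (hup : a' * up + upUp - up * b - upLeft = cUp)
    (hleft : a * left + upLeft - left * b' - leftLeft = cLeft) :
    (a' - star a) * up = c * b - star a * c + cLeft + cUp + leftLeft - upUp -
      left * (star b - b') := by
  have sylvester_eq : a * x - x * b = c - up + left := by rw [← hx]; abel
  have eliminated : (c - up + left) * b - star a * (c - up + left) = 0 :=
    sylvester_eq ▸ h.mul_sub_star_mul_sylvester_eq_zero x
  linear_combination (norm := noncomm_ring) hup + hleft - eliminated - h.trace_mul left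

end TraceNorm

section Recursion

lemma eq_of_counterdiagonal_recursion {M : Type*} {n m : ℕ} {F : ℕ → ℕ → M → M → M → M}
    {u v : ℕ → ℕ → M} (h_row : ∀ j, u 0 j = v 0 j) (h_col : ∀ k, u k 0 = v k 0)
    (hu : ∀ k j, 1 ≤ k → 1 ≤ j → j ≤ m → k + j ≤ n →
      u k j = F k j (u (k + 1) (j - 2)) (u (k - 1) j) (u (k + 1) (j - 1)))
    (hv : ∀ k j, 1 ≤ k → 1 ≤ j → j ≤ m → k + j ≤ n →
      v k j = F k j (v (k + 1) (j - 2)) (v (k - 1) j) (v (k + 1) (j - 1)))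
    (k j : ℕ) (hj : j ≤ m) (hkj : k + j ≤ n) : u k j = v k j := by
  induction j using Nat.strong_induction_on generalizing k with
  | _ j ih_col =>
    induction k with
    | zero => exact h_row j
    | succ k ih_row =>
      rcases Nat.eq_zero_or_pos j with rfl | hj_pos
      · exact h_col (k + 1)
      rw [hu _ _ (by omega) hj_pos hj hkj, hv _ _ (by omega) hj_pos hj hkj,
        ih_col (j - 2) (by omega) _ (by omega) (by omega),
        ih_col (j - 1) (by omega) _ (by omega) (by omega),
        Nat.add_sub_cancel, ih_row (by omega)]

lemma counterdiagonal_recursion_of_bidiagonal_system {D : Type*} [DivisionRing D]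
    [InvolutiveStar D] {n m : ℕ} {α β : ℕ → D} {c x : ℕ → ℕ → D}
    (hαβ : ∀ i j, 1 ≤ i → i ≤ n → 1 ≤ j → j ≤ m → ShareCentralTraceNorm (α i) (β j))
    (hα : ∀ k, 1 ≤ k → k < n → α (k + 1) ≠ star (α k))
    (hx : ∀ i j, 1 ≤ i → i ≤ n → j ≤ m →
      α i * x i j + x (i - 1) j - x i j * β j - x i (j - 1) = c i j)
    (k j : ℕ) (hk : 1 ≤ k) (hj : 1 ≤ j) (hjm : j ≤ m) (hkj : k + j ≤ n) :
    x k j = (α k - star (α (k + 1)))⁻¹ *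
      (c (k + 1) j * β j - star (α (k + 1)) * c (k + 1) j + c (k + 1) (j - 1) + c k j +
        x (k + 1) (j - 2) - x (k - 1) j - x (k + 1) (j - 1) * (star (β j) - β (j - 1))) := by
  have coeff_ne_zero : α k - star (α (k + 1)) ≠ 0 := fun h0 =>
    hα k hk (by omega) (by rw [sub_eq_zero.mp h0, star_star])
  rw [eq_inv_mul_iff_mul_eq₀ coeff_ne_zero]
  exact (hαβ (k + 1) j (by omega) (by omega) hj hjm).sub_star_mul_of_bidiagonal_system
    (hx (k + 1) j (by omega) (by omega) hjm) (hx k j hk (by omega) hjm)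
    (hx (k + 1) (j - 1) (by omega) (by omega) (by omega))

end Recursion

section Bidiagonal

variable {R : Type*} {n m : ℕ}

/-- The entry `x_{i,j}` of `X` in the 1-based indexing of the paper, extended by `0` to all other
indices, so that neighbours outside the matrix need no case distinction. -/
def paddedEntry [Zero R] (X : Matrix (Fin n) (Fin m) R) (i j : ℕ) : R :=
  if h : (1 ≤ i ∧ i ≤ n) ∧ (1 ≤ j ∧ j ≤ m) then X ⟨i - 1, by omega⟩ ⟨j - 1, by omega⟩ else 0

/-- The matrix `𝒥_𝛂` of a chain `𝛂 = (α_1, …, α_n)`, given as a sequence read from index `1`. -/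
def lowerBidiagonal [Zero R] [One R] (n : ℕ) (α : ℕ → R) : Matrix (Fin n) (Fin n) R :=
  Matrix.of fun i j =>
    if (i : ℕ) = (j : ℕ) then α ((i : ℕ) + 1) else if (i : ℕ) = (j : ℕ) + 1 then 1 else 0

/-- The matrix `𝒥_𝛃ᵀ` of a chain `𝛃 = (β_1, …, β_m)`, given as a sequence read from index `1`. -/
def upperBidiagonal [Zero R] [One R] (m : ℕ) (β : ℕ → R) : Matrix (Fin m) (Fin m) R :=
  Matrix.of fun i j =>
    if (i : ℕ) = (j : ℕ) then β ((i : ℕ) + 1) else if (j : ℕ) = (i : ℕ) + 1 then 1 else 0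

lemma paddedEntry_zero_left [Zero R] (X : Matrix (Fin n) (Fin m) R) (j : ℕ) :
    paddedEntry X 0 j = 0 :=
  dif_neg (by omega)

lemma paddedEntry_zero_right [Zero R] (X : Matrix (Fin n) (Fin m) R) (i : ℕ) :
    paddedEntry X i 0 = 0 :=
  dif_neg (by omega)

lemma paddedEntry_succ [Zero R] (X : Matrix (Fin n) (Fin m) R) (i : Fin n) (j : Fin m) :
    paddedEntry X (i + 1) (j + 1) = X i j :=
  dif_pos (by omega)

lemma sum_ite_eq_val_succ {M : Type*} [AddCommMonoid M] {i : ℕ} {f : ℕ → M} (hf : f 0 = 0)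
    (hi : i ≤ n) : ∑ k : Fin n, (if i = (k : ℕ) + 1 then f (k + 1) else 0) = f i := by
  rw [Fin.sum_univ_eq_sum_range (fun k => if i = k + 1 then f (k + 1) else 0) n]
  cases i with
  | zero => simp [hf]
  | succ i => simp [Nat.lt_of_succ_le hi]

lemma lowerBidiagonal_mul_apply [NonAssocSemiring R] (α : ℕ → R) (X : Matrix (Fin n) (Fin m) R)
    (i : Fin n) (j : Fin m) :
    (lowerBidiagonal n α * X) i j = α (i + 1) * X i j + paddedEntry X i (j + 1) := by
  have term_eq (k : Fin n) : lowerBidiagonal n α i k * X k j =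
      (if i = k then α (i + 1) * X k j else 0) +
        if (i : ℕ) = k + 1 then paddedEntry X (k + 1) (j + 1) else 0 := by
    rw [paddedEntry_succ, lowerBidiagonal, Matrix.of_apply]
    split_ifs <;> first | omega | simp
  rw [Matrix.mul_apply, Finset.sum_congr rfl fun k _ => term_eq k, Finset.sum_add_distrib,
    Fintype.sum_ite_eq,
    sum_ite_eq_val_succ (f := fun k => paddedEntry X k (j + 1)) (paddedEntry_zero_left X _)
      i.is_lt.le]

lemma mul_upperBidiagonal_apply [NonAssocSemiring R] (β : ℕ → R) (X : Matrix (Fin n) (Fin m) R)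
    (i : Fin n) (j : Fin m) :
    (X * upperBidiagonal m β) i j = X i j * β (j + 1) + paddedEntry X (i + 1) j := by
  have term_eq (k : Fin m) : X i k * upperBidiagonal m β k j =
      (if j = k then X i k * β (k + 1) else 0) +
        if (j : ℕ) = k + 1 then paddedEntry X (i + 1) (k + 1) else 0 := by
    rw [paddedEntry_succ, upperBidiagonal, Matrix.of_apply]
    split_ifs <;> first | omega | simp
  rw [Matrix.mul_apply, Finset.sum_congr rfl fun k _ => term_eq k, Finset.sum_add_distrib,
    Fintype.sum_ite_eq,
    sum_ite_eq_val_succ (f := fun k => paddedEntry X (i + 1) k) (paddedEntry_zero_right X _)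
      j.is_lt.le]

lemma paddedEntry_sylvester [NonAssocRing R] {α β : ℕ → R} {c : ℕ → ℕ → R}
    (hc : ∀ i, c i 0 = 0) {X : Matrix (Fin n) (Fin m) R}
    (hX : lowerBidiagonal n α * X - X * upperBidiagonal m β =
      Matrix.of fun (i : Fin n) (j : Fin m) => c (i + 1) (j + 1))
    (i j : ℕ) (hi : 1 ≤ i) (hin : i ≤ n) (hjm : j ≤ m) :
    α i * paddedEntry X i j + paddedEntry X (i - 1) j - paddedEntry X i j * β j -
      paddedEntry X i (j - 1) = c i j := by
  obtain ⟨i, rfl⟩ := Nat.exists_eq_add_of_le' hi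
  cases j with
  | zero =>
    simp only [paddedEntry_zero_right, hc, Nat.zero_sub, mul_zero, zero_mul, add_zero, sub_zero]
  | succ j =>
    have entry_eq := Matrix.ext_iff.mpr hX ⟨i, hin⟩ ⟨j, hjm⟩
    rw [Matrix.sub_apply, lowerBidiagonal_mul_apply, mul_upperBidiagonal_apply,
      ← paddedEntry_succ X, ← sub_sub] at entry_eq
    exact entry_eq

end Bidiagonal

section QuaternionConj

lemma quaternion_re_mul_comm {R : Type*} [CommRing R] (a b : ℍ[R]) : (a * b).re = (b * a).re := by
  simp only [Quaternion.re_mul]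
  ring

variable {R : Type*} [Field R] [LinearOrder R] [IsStrictOrderedRing R]

lemma re_quaternion_conj {h : ℍ[R]} (hh : h ≠ 0) (b : ℍ[R]) : (h⁻¹ * b * h).re = b.re := by
  rw [quaternion_re_mul_comm, ← mul_assoc, mul_inv_cancel₀ hh, one_mul]

lemma normSq_quaternion_conj {h : ℍ[R]} (hh : h ≠ 0) (b : ℍ[R]) :
    normSq (h⁻¹ * b * h) = normSq b := by
  rw [map_mul, mul_comm, ← map_mul, ← mul_assoc, mul_inv_cancel₀ hh, one_mul]

lemma quaternion_coe_mem_center_s16 (r : R) : (r : ℍ[R]) ∈ Set.center ℍ[R] :=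
  Semigroup.mem_center_iff.mpr fun x => (Quaternion.coe_commutes r x).symm

lemma shareCentralTraceNorm_of_exists_conj {a b : ℍ[R]}
    (hab : ∃ h : ℍ[R], h ≠ 0 ∧ a = h⁻¹ * b * h) :
    ShareCentralTraceNorm a b := by
  obtain ⟨h, hh, rfl⟩ := hab
  constructor
  · rw [Quaternion.self_add_star', Quaternion.self_add_star', re_quaternion_conj hh]
  · rw [Quaternion.star_mul_self, Quaternion.star_mul_self, normSq_quaternion_conj hh]
  · rw [Quaternion.self_add_star']
    exact quaternion_coe_mem_center_s16 _
  · rw [Quaternion.star_mul_self]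
    exact quaternion_coe_mem_center_s16 _

end QuaternionConj

theorem singular_solution_rigidity_general {D : Type*} [DivisionRing D] [InvolutiveStar D]
    {n m : ℕ} {α β : ℕ → D}
    (hαβ : ∀ i j, 1 ≤ i → i ≤ n → 1 ≤ j → j ≤ m → ShareCentralTraceNorm (α i) (β j))
    (hα : ∀ k, 1 ≤ k → k < n → α (k + 1) ≠ star (α k))
    {c : ℕ → ℕ → D} (hc : ∀ i, c i 0 = 0) {d : ℕ → ℕ → D}
    (hd : ∀ i j, d i j = c i j * β j - star (α i) * c i j + c i (j - 1) + c (i - 1) j)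
    {Γ : ℕ → ℕ → D} (hΓ_row : ∀ j, Γ 0 j = 0) (hΓ_col : ∀ k, Γ k 0 = 0)
    (hΓ : ∀ k j, 1 ≤ k → 1 ≤ j → j ≤ m → k + j ≤ n →
      Γ k j = (α k - star (α (k + 1)))⁻¹ *
        (d (k + 1) j + Γ (k + 1) (j - 2) - Γ (k - 1) j -
          Γ (k + 1) (j - 1) * (star (β j) - β (j - 1))))
    {X : Matrix (Fin n) (Fin m) D}
    (hX : lowerBidiagonal n α * X - X * upperBidiagonal m β =
      Matrix.of fun (i : Fin n) (j : Fin m) => c (i + 1) (j + 1))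
    (i : Fin n) (j : Fin m) (hij : (i + 1 : ℕ) + (j + 1) ≤ n) : X i j = Γ (i + 1) (j + 1) := by
  have hX_rec := counterdiagonal_recursion_of_bidiagonal_system hαβ hα (paddedEntry_sylvester hc hX)
  simp only [hd, Nat.add_sub_cancel] at hΓ
  rw [← paddedEntry_succ X]
  exact eq_of_counterdiagonal_recursion
    (F := fun k j leftLeft upUp left => (α k - star (α (k + 1)))⁻¹ *
      (c (k + 1) j * β j - star (α (k + 1)) * c (k + 1) j + c (k + 1) (j - 1) + c k j +
        leftLeft - upUp - left * (star (β j) - β (j - 1))))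
    (fun j => (paddedEntry_zero_left X j).trans (hΓ_row j).symm)
    (fun k => (paddedEntry_zero_right X k).trans (hΓ_col k).symm) hX_rec hΓ _ _ j.is_lt hij

/-- singular case, rigidity of solutions.  With spherical chains
`𝛂 = (α_1,…,α_n)`, `𝛃 = (β_1,…,β_m)`, `m ≤ n`, in the same conjugacy class,
`A = 𝒥_𝛂` lower bidiagonal, `B = 𝒥_𝛃ᵀ` upper bidiagonal, and `d_{i,j}`, `Γ_{k,j}` as in
the context, every solution `X = [x_{i,j}]` of `AX − XB = C` satisfies `x_{i,j} = Γ_{i,j}`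
for all `i ≥ 1`, `j ≥ 1` with `i < n`, `j ≤ m`, `i + j ≤ n`.
(All indexing of `α, β, c, d, Γ` is 1-based, with index `0` realizing the
"nonpositive index ↦ 0" convention; the matrices are indexed by `Fin`.) -/
theorem singular_solution_rigidity (n m : ℕ) (hmn : m ≤ n) (α β : ℕ → ℍ[ℝ])
    (hαconj : ∀ i j, 1 ≤ i → i ≤ n → 1 ≤ j → j ≤ n →
      ∃ h : ℍ[ℝ], h ≠ 0 ∧ α i = h⁻¹ * α j * h)
    (hβconj : ∀ i j, 1 ≤ i → i ≤ m → 1 ≤ j → j ≤ m →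
      ∃ h : ℍ[ℝ], h ≠ 0 ∧ β i = h⁻¹ * β j * h)
    (hαβconj : ∀ i j, 1 ≤ i → i ≤ n → 1 ≤ j → j ≤ m →
      ∃ h : ℍ[ℝ], h ≠ 0 ∧ α i = h⁻¹ * β j * h)
    (hαchain : ∀ k, 1 ≤ k → k < n → α (k + 1) ≠ star (α k))
    (hβchain : ∀ k, 1 ≤ k → k < m → β (k + 1) ≠ star (β k))
    (c : ℕ → ℕ → ℍ[ℝ]) (hc0 : ∀ j, c 0 j = 0) (hc0' : ∀ i, c i 0 = 0)
    (d : ℕ → ℕ → ℍ[ℝ])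
    (hd : ∀ i j, d i j = c i j * β j - star (α i) * c i j + c i (j - 1) + c (i - 1) j)
    (Γ : ℕ → ℕ → ℍ[ℝ]) (hΓ0 : ∀ j, Γ 0 j = 0) (hΓ0' : ∀ k, Γ k 0 = 0)
    (hΓ : ∀ k j, 1 ≤ k → 1 ≤ j → j ≤ m → k + j ≤ n →
      Γ k j = (α k - star (α (k + 1)))⁻¹ *
        (d (k + 1) j + Γ (k + 1) (j - 2) - Γ (k - 1) j -
          Γ (k + 1) (j - 1) * (star (β j) - β (j - 1))))
    (A : Matrix (Fin n) (Fin n) ℍ[ℝ])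
    (hA : A = Matrix.of fun (i j : Fin n) =>
      if (i : ℕ) = (j : ℕ) then α ((i : ℕ) + 1)
      else if (i : ℕ) = (j : ℕ) + 1 then 1 else 0)
    (B : Matrix (Fin m) (Fin m) ℍ[ℝ])
    (hB : B = Matrix.of fun (i j : Fin m) =>
      if (i : ℕ) = (j : ℕ) then β ((i : ℕ) + 1)
      else if (j : ℕ) = (i : ℕ) + 1 then 1 else 0)
    (C : Matrix (Fin n) (Fin m) ℍ[ℝ])
    (hC : C = Matrix.of fun (i : Fin n) (j : Fin m) => c ((i : ℕ) + 1) ((j : ℕ) + 1)) :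
    ∀ X : Matrix (Fin n) (Fin m) ℍ[ℝ], A * X - X * B = C →
      ∀ i j, ∀ hi1 : 1 ≤ i, ∀ hj1 : 1 ≤ j, ∀ hin : i < n, ∀ hjm : j ≤ m, i + j ≤ n →
        X ⟨i - 1, by omega⟩ ⟨j - 1, by omega⟩ = Γ i j := by
  subst hA hB hC
  intro X hX i j hi hj _ hjm hij
  obtain ⟨i, rfl⟩ := Nat.exists_eq_add_of_le' hi
  obtain ⟨j, rfl⟩ := Nat.exists_eq_add_of_le' hj
  exact singular_solution_rigidity_general
    (fun i j hi hin hj hjm => shareCentralTraceNorm_of_exists_conj (hαβconj i j hi hin hj hjm))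
    hαchain hc0' hd hΓ0 hΓ0' hΓ hX ⟨i, _⟩ ⟨j, hjm⟩ hij
end
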